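/- Let d be a positive integer and let S = {S_k ≤ Sym({1,…,m_k})}_{k∈ℕ} be a sequence of finite transitive permutation groups such that each S_k is perfect and can be generated by at most d elements as an abstract group. Suppose that for every k ∈ ℕ there exist points i, j ∈ {1,…,m_k} with St_{S_k}(i) ≠ St_{S_k}(j). Let G = lim← G_n be an infinitely iterated mixed wreath product of type (S,{k_n}) of stride at most m. Then G is topologically finitely generated; more precisely, G is topologically generated by at most 2md elements. -/

import Mathlib

open Equiv

/-- The product-action permutation of `β → α` induced by `a : β → Perm α` and `b : Perm β`. -/
def prodPerm {α β : Type} (a : β → Perm α) (b : Perm β) : Perm (β → α) where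
  toFun x := fun i => a i (x (b⁻¹ i))
  invFun x := fun i => (a (b i))⁻¹ (x (b i))
  left_inv x := by funext i; simp
  right_inv x := by funext i; simp

@[simp] theorem prodPerm_apply {α β : Type} (a : β → Perm α) (b : Perm β) (x : β → α) (i : β) :
    prodPerm a b x i = a i (x (b⁻¹ i)) := rfl

theorem prodPerm_one {α β : Type} :
    prodPerm (fun _ : β => (1 : Perm α)) 1 = 1 := by
  apply Equiv.ext; intro x; funext i; simp

theorem prodPerm_mul {α β : Type} (a a' : β → Perm α) (b b' : Perm β) :
    prodPerm a b * prodPerm a' b' = prodPerm (fun i => a i * a' (b⁻¹ i)) (b * b') := by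
  apply Equiv.ext; intro x; funext i
  simp [Perm.mul_apply, mul_inv_rev]

theorem prodPerm_inv {α β : Type} (a : β → Perm α) (b : Perm β) :
    (prodPerm a b)⁻¹ = prodPerm (fun i => (a (b i))⁻¹) b⁻¹ := by
  apply Equiv.ext; intro x; funext i
  simp [prodPerm, Perm.inv_def]

/-- The exponentiation `A ⟨≀⟩ B` of permutation groups, as a subgroup of `Perm (β → α)`
acting by the product action. -/
def expWr {α β : Type} (A : Subgroup (Perm α)) (B : Subgroup (Perm β)) :
    Subgroup (Perm (β → α)) where
  carrier := {π | ∃ (a : β → Perm α) (b : Perm β),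
    (∀ i, a i ∈ A) ∧ b ∈ B ∧ π = prodPerm a b}
  one_mem' := ⟨fun _ => 1, 1, fun _ => A.one_mem, B.one_mem, prodPerm_one.symm⟩
  mul_mem' := by
    rintro π π' ⟨a, b, ha, hb, rfl⟩ ⟨a', b', ha', hb', rfl⟩
    exact ⟨fun i => a i * a' (b⁻¹ i), b * b',
      fun i => A.mul_mem (ha i) (ha' _), B.mul_mem hb hb', prodPerm_mul a a' b b'⟩
  inv_mem' := by
    rintro π ⟨a, b, ha, hb, rfl⟩
    exact ⟨fun i => (a (b i))⁻¹, b⁻¹,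
      fun i => A.inv_mem (ha _), B.inv_mem hb, prodPerm_inv a b⟩

/-- A bundled permutation group: a set together with a subgroup of its permutation group. -/
structure PermGroup where
  carrier : Type
  grp : Subgroup (Perm carrier)

/-- Exponentiation of bundled permutation groups. -/
def ExpP (A B : PermGroup) : PermGroup :=
  ⟨B.carrier → A.carrier, expWr A.grp B.grp⟩

/-- Iterated exponentiation of a sequence of permutation groups:
`S̃ 0 = S 0` and `S̃ (k+1) = S (k+1) ⟨≀⟩ S̃ k`. -/
def iterExpP (S : ℕ → PermGroup) : ℕ → PermGroup
  | 0 => S 0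
  | k + 1 => ExpP (S (k + 1)) (iterExpP S k)

/-- `π'` in `A ⟨≀⟩ P` projects to `π` in `P`. -/
def IsLift {A P : PermGroup} (π' : (ExpP A P).grp) (π : P.grp) : Prop :=
  ∃ a : P.carrier → Perm A.carrier, (∀ i, a i ∈ A.grp) ∧
    (π' : Perm (ExpP A P).carrier) = prodPerm a (π : Perm P.carrier)

theorem IsLift.one {A P : PermGroup} : IsLift (A := A) (P := P) 1 1 :=
  ⟨fun _ => 1, fun _ => A.grp.one_mem, by
    simp only [OneMemClass.coe_one]
    exact prodPerm_one.symm⟩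

theorem IsLift.mul {A P : PermGroup} {π₁ π₂ : (ExpP A P).grp} {ρ₁ ρ₂ : P.grp}
    (h₁ : IsLift π₁ ρ₁) (h₂ : IsLift π₂ ρ₂) : IsLift (π₁ * π₂) (ρ₁ * ρ₂) := by
  obtain ⟨a, ha, hEq⟩ := h₁
  obtain ⟨a', ha', hEq'⟩ := h₂
  exact ⟨fun i => a i * a' ((ρ₁ : Perm P.carrier)⁻¹ i),
    fun i => A.grp.mul_mem (ha i) (ha' _), by
      push_cast [hEq, hEq']
      exact prodPerm_mul a a' _ _⟩

theorem IsLift.inv {A P : PermGroup} {π₁ : (ExpP A P).grp} {ρ₁ : P.grp}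
    (h₁ : IsLift π₁ ρ₁) : IsLift π₁⁻¹ ρ₁⁻¹ := by
  obtain ⟨a, ha, hEq⟩ := h₁
  exact ⟨fun i => (a ((ρ₁ : Perm P.carrier) i))⁻¹,
    fun i => A.grp.inv_mem (ha _), by
      push_cast [hEq]
      exact prodPerm_inv a _⟩

/-- The inverse limit of the iterated exponentiations, realised as the subgroup of
compatible sequences in the product of all the finite levels. -/
def iterLimit (S : ℕ → PermGroup) : Subgroup (∀ k, (iterExpP S k).grp) where
  carrier := {f | ∀ k, IsLift (A := S (k + 1)) (P := iterExpP S k) (f (k + 1)) (f k)}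
  one_mem' := fun _ => IsLift.one
  mul_mem' := fun hf hg k => IsLift.mul (hf k) (hg k)
  inv_mem' := fun hf k => IsLift.inv (hf k)

/-- Each finite level carries the discrete topology; the limit then carries the subspace
topology of the product topology, i.e. the usual profinite topology. -/
instance (S : ℕ → PermGroup) (k : ℕ) : TopologicalSpace ((iterExpP S k).grp) := ⊥

/-- The minimal number of generators of a group. -/
noncomputable def minGens (G : Type*) [Group G] : ℕ :=
  sInf {r | ∃ T : Finset G, T.card = r ∧ Subgroup.closure (T : Set G) = ⊤}
/-- The imprimitive (permutational wreath) permutation of `α × β` induced by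
`a : β → Perm α` and `b : Perm β`. -/
def wrPerm {α β : Type} (a : β → Perm α) (b : Perm β) : Perm (α × β) where
  toFun p := (a (b p.2) p.1, b p.2)
  invFun p := ((a p.2)⁻¹ p.1, b⁻¹ p.2)
  left_inv p := by simp
  right_inv p := by simp

theorem wrPerm_one {α β : Type} :
    wrPerm (fun _ : β => (1 : Perm α)) 1 = 1 := by
  apply Equiv.ext; intro p; simp [wrPerm]

theorem wrPerm_mul {α β : Type} (a a' : β → Perm α) (b b' : Perm β) :
    wrPerm a b * wrPerm a' b' = wrPerm (fun j => a j * a' (b⁻¹ j)) (b * b') := by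
  apply Equiv.ext; intro p
  simp [wrPerm, Perm.mul_apply]

theorem wrPerm_inv {α β : Type} (a : β → Perm α) (b : Perm β) :
    (wrPerm a b)⁻¹ = wrPerm (fun j => (a (b j))⁻¹) b⁻¹ := by
  apply Equiv.ext; intro p
  simp [wrPerm, Perm.inv_def]

/-- The permutational wreath product `A ≀ B` of permutation groups, as a subgroup of
`Perm (α × β)` acting by the imprimitive action. -/
def permWr {α β : Type} (A : Subgroup (Perm α)) (B : Subgroup (Perm β)) :
    Subgroup (Perm (α × β)) where
  carrier := {π | ∃ (a : β → Perm α) (b : Perm β),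
    (∀ i, a i ∈ A) ∧ b ∈ B ∧ π = wrPerm a b}
  one_mem' := ⟨fun _ => 1, 1, fun _ => A.one_mem, B.one_mem, wrPerm_one.symm⟩
  mul_mem' := by
    rintro π π' ⟨a, b, ha, hb, rfl⟩ ⟨a', b', ha', hb', rfl⟩
    exact ⟨fun j => a j * a' (b⁻¹ j), b * b',
      fun j => A.mul_mem (ha j) (ha' _), B.mul_mem hb hb', wrPerm_mul a a' b b'⟩
  inv_mem' := by
    rintro π ⟨a, b, ha, hb, rfl⟩
    exact ⟨fun j => (a (b j))⁻¹, b⁻¹,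
      fun j => A.inv_mem (ha _), B.inv_mem hb, wrPerm_inv a b⟩

/-- Permutational wreath product of bundled permutation groups. -/
def WrP (A B : PermGroup) : PermGroup :=
  ⟨A.carrier × B.carrier, permWr A.grp B.grp⟩

/-- The iterated mixed wreath product determined by a sequence of permutation groups `S`
and a function `e : ℕ → Bool` recording at which levels the exponentiation (product
action) is used instead of the permutational wreath product. -/
def mixedPG (S : ℕ → PermGroup) (e : ℕ → Bool) : ℕ → PermGroup
  | 0 => S 0
  | k + 1 => cond (e (k + 1)) (ExpP (S (k + 1)) (mixedPG S e k))
      (WrP (S (k + 1)) (mixedPG S e k))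

/-- `π'` in `A ≀ P` projects to `π` in `P`. -/
def IsLiftWr {A P : PermGroup} (π' : (WrP A P).grp) (π : P.grp) : Prop :=
  ∃ a : P.carrier → Perm A.carrier, (∀ i, a i ∈ A.grp) ∧
    (π' : Perm (WrP A P).carrier) = wrPerm a (π : Perm P.carrier)

theorem IsLiftWr.one {A P : PermGroup} : IsLiftWr (A := A) (P := P) 1 1 :=
  ⟨fun _ => 1, fun _ => A.grp.one_mem, by
    simp only [OneMemClass.coe_one]
    exact wrPerm_one.symm⟩

theorem IsLiftWr.mul {A P : PermGroup} {π₁ π₂ : (WrP A P).grp} {ρ₁ ρ₂ : P.grp}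
    (h₁ : IsLiftWr π₁ ρ₁) (h₂ : IsLiftWr π₂ ρ₂) : IsLiftWr (π₁ * π₂) (ρ₁ * ρ₂) := by
  obtain ⟨a, ha, hEq⟩ := h₁
  obtain ⟨a', ha', hEq'⟩ := h₂
  exact ⟨fun j => a j * a' ((ρ₁ : Perm P.carrier)⁻¹ j),
    fun j => A.grp.mul_mem (ha j) (ha' _), by
      push_cast [hEq, hEq']
      exact wrPerm_mul a a' _ _⟩

theorem IsLiftWr.inv {A P : PermGroup} {π₁ : (WrP A P).grp} {ρ₁ : P.grp}
    (h₁ : IsLiftWr π₁ ρ₁) : IsLiftWr π₁⁻¹ ρ₁⁻¹ := by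
  obtain ⟨a, ha, hEq⟩ := h₁
  exact ⟨fun j => (a ((ρ₁ : Perm P.carrier) j))⁻¹,
    fun j => A.grp.inv_mem (ha _), by
      push_cast [hEq]
      exact wrPerm_inv a _⟩

/-- The projection relation for a mixed step: exponentiation if `b = true`, permutational
wreath product if `b = false`. -/
def IsLiftMixed (A P : PermGroup) (b : Bool) :
    ((cond b (ExpP A P) (WrP A P)).grp) → (P.grp) → Prop :=
  match b with
  | true => fun π' π => IsLift π' π
  | false => fun π' π => IsLiftWr π' π

theorem IsLiftMixed.one {A P : PermGroup} (b : Bool) : IsLiftMixed A P b 1 1 := by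
  cases b
  · exact IsLiftWr.one
  · exact IsLift.one

theorem IsLiftMixed.mul {A P : PermGroup} (b : Bool)
    {π₁ π₂ : ((cond b (ExpP A P) (WrP A P)).grp)} {ρ₁ ρ₂ : P.grp}
    (h₁ : IsLiftMixed A P b π₁ ρ₁) (h₂ : IsLiftMixed A P b π₂ ρ₂) :
    IsLiftMixed A P b (π₁ * π₂) (ρ₁ * ρ₂) := by
  cases b
  · exact IsLiftWr.mul h₁ h₂
  · exact IsLift.mul h₁ h₂

theorem IsLiftMixed.inv {A P : PermGroup} (b : Bool)
    {π₁ : ((cond b (ExpP A P) (WrP A P)).grp)} {ρ₁ : P.grp}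
    (h₁ : IsLiftMixed A P b π₁ ρ₁) : IsLiftMixed A P b π₁⁻¹ ρ₁⁻¹ := by
  cases b
  · exact IsLiftWr.inv h₁
  · exact IsLift.inv h₁

/-- The inverse limit of an iterated mixed wreath product, realised as the subgroup of
compatible sequences in the product of all the finite levels. -/
def mixedLimit (S : ℕ → PermGroup) (e : ℕ → Bool) :
    Subgroup (∀ k, (mixedPG S e k).grp) where
  carrier := {f | ∀ k,
    IsLiftMixed (S (k + 1)) (mixedPG S e k) (e (k + 1)) (f (k + 1)) (f k)}
  one_mem' := fun k => IsLiftMixed.one _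
  mul_mem' := fun hf hg k => IsLiftMixed.mul _ (hf k) (hg k)
  inv_mem' := fun hf k => IsLiftMixed.inv _ (hf k)

/-- Each finite level carries the discrete topology; the limit then carries the subspace
topology of the product topology, i.e. the usual profinite topology. -/
instance (S : ℕ → PermGroup) (e : ℕ → Bool) (k : ℕ) :
    TopologicalSpace ((mixedPG S e k).grp) := ⊥

/-!
An element of the limit is given by its component in `S 0` and a portrait, which labels every point
of every level `k` with an element of `S (k + 1)`. It is finitary if its portrait is trivial from
some level `n` on, and directed if its portrait is concentrated on one base point per level. The
base points are chosen compatibly with the steps, where an exponentiation step replaces the base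
point by a constant function. Since the action permutes the coordinates of a function, a finitary
element of depth `n` fixes all base points from the first exponentiation step above `n` on, hence
from level `n + m` on.

Let `K` be generated by `d` generators of `S 0` and, for every residue `r` modulo `m`, by `d`
directed elements whose labels generate `S (k + 1)` at the levels `k ≡ r` and are trivial elsewhere.
If `K` contains the finitary elements of depth `n` and the directed elements cut off below level
`n`, then the commutator of a directed element for the residue of `n` with a finitary element of
depth `n` only sees the label at level `n`, because the remaining labels sit at level `n + m` or
above. So `K` contains all `x⁻¹ y`, where `x` and `y` carry the same generator at the base point and
at another point of level `n`. As `S (n + 1)` is perfect and the level has at least three points,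
commutators of such elements generate the whole base group of the next step. By induction `K`
contains all finitary elements, so it is dense, and it has `(m + 1) * d` generators.
-/

section Generation

open scoped commutatorElement

variable {A ι : Type*} [Group A]

theorem nontrivial_of_stabilizers_ne {α : Type*} {H : Subgroup (Perm α)} {i j : α}
    (h : {σ : Perm α | σ ∈ H ∧ σ i = i} ≠ {σ : Perm α | σ ∈ H ∧ σ j = j}) : Nontrivial H := by
  refine not_subsingleton_iff_nontrivial.mp fun _ => h (Set.ext fun σ => ?_)
  refine and_congr_right fun hσ => ?_
  obtain rfl : σ = 1 := congrArg Subtype.val (Subsingleton.elim (⟨σ, hσ⟩ : H) 1)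
  exact iff_of_true rfl rfl

theorem two_lt_card_of_isPerfect {Ω : Type*} [Finite Ω] (H : Subgroup (Perm Ω)) [Nontrivial H]
    [Group.IsPerfect H] : 2 < Nat.card Ω := by
  by_contra! hcard
  have := Perm.isMulCommutative_iff_card_le_two.mpr hcard
  exact Group.IsPerfect.not_isMulCommutative H inferInstance

theorem nontrivial_compl_singleton_of_two_lt_card {Ω : Type*} (h : 2 < Nat.card Ω) (c : Ω) :
    ({c}ᶜ : Set Ω).Nontrivial := by
  have : Finite Ω := Nat.finite_of_card_ne_zero (by lia)
  rw [← Set.one_lt_ncard_iff_nontrivial, Set.ncard_compl, Set.ncard_singleton]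
  lia

theorem exists_fin_range_subset {G : Type*} [Nonempty G] [Fintype ι] (g : ι → G) {n : ℕ}
    (h : Fintype.card ι ≤ n) : ∃ g' : Fin n → G, Set.range g ⊆ Set.range g' := by
  obtain ⟨emb⟩ : Nonempty (ι ↪ Fin n) := Function.Embedding.nonempty_of_card_le (by simpa)
  refine ⟨Function.extend emb g fun _ => Classical.arbitrary G, ?_⟩
  rintro _ ⟨i, rfl⟩
  exact ⟨emb i, emb.injective.extend_apply g _ i⟩

theorem exists_fin_closure_range_eq_top {d : ℕ} {T : Finset A} (hT : T.card ≤ d)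
    (hcl : Subgroup.closure (T : Set A) = ⊤) :
    ∃ t : Fin d → A, Subgroup.closure (Set.range t) = ⊤ := by
  obtain ⟨t, ht⟩ := exists_fin_range_subset ((↑) : T → A) (by simpa using hT)
  refine ⟨t, top_unique (hcl ▸ Subgroup.closure_mono ?_)⟩
  simpa using ht

theorem range_le_of_forall_mem {Γ : Type*} [Group Γ] {K : Subgroup Γ} {t : ι → A}
    (ht : Subgroup.closure (Set.range t) = ⊤) {ψ : A →* Γ} (h : ∀ i, ψ (t i) ∈ K) :
    ψ.range ≤ K := by
  rw [MonoidHom.range_eq_map, ← ht, MonoidHom.map_closure, Subgroup.closure_le]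
  rintro _ ⟨_, ⟨i, rfl⟩, rfl⟩
  exact h i

variable {Ω : Type*} [DecidableEq Ω]

theorem mulSingle_inv_smul {G : Type*} [Group G] [MulAction G Ω] (g : G) (w : Ω) (x : A) :
    (fun v => (Pi.mulSingle w x : Ω → A) (g⁻¹ • v)) = Pi.mulSingle (g • w) x := by
  funext v
  simp only [Pi.mulSingle_apply, inv_smul_eq_iff]

theorem commutatorElement_eq_mulSingle {c w₁ w₂ : Ω} (hw : w₁ ≠ w₂) {p q : Ω → A}
    (hp : ∀ v ∉ ({c, w₁} : Set Ω), p v = 1) (hq : ∀ v ∉ ({c, w₂} : Set Ω), q v = 1) :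
    ⁅p, q⁆ = Pi.mulSingle c ⁅p c, q c⁆ := by
  funext v
  obtain rfl | hvc := eq_or_ne v c
  · simp [commutatorElement_def]
  obtain rfl | hvw := eq_or_ne v w₁
  · simp [commutatorElement_def, hq v (by simp [hvc, hw]), hvc]
  · simp [commutatorElement_def, hp v (by simp [hvc, hvw]), hvc]

variable {t : ι → A} {c : Ω} {Q : Subgroup (Ω → A)}

theorem exists_mem_apply_eq_of_mulSingle_inv_mul_mem
    (ht : Subgroup.closure (Set.range t) = ⊤) {w : Ω} (hw : w ≠ c)
    (hQ : ∀ i, (Pi.mulSingle c (t i))⁻¹ * Pi.mulSingle w (t i) ∈ Q) (a : A) :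
    ∃ q ∈ Q, q c = a ∧ ∀ v ∉ ({c, w} : Set Ω), q v = 1 := by
  have hmap : (Q ⊓ Subgroup.pi {c, w}ᶜ fun _ => ⊥).map (Pi.evalMonoidHom _ c) = ⊤ := by
    rw [eq_top_iff, ← ht, Subgroup.closure_le]
    rintro _ ⟨i, rfl⟩
    refine ⟨_, ⟨Q.inv_mem (hQ i), fun v hv => ?_⟩, ?_⟩
    · simp only [Set.mem_compl_iff, Set.mem_insert_iff, Set.mem_singleton_iff, not_or] at hv
      simp [hv.1, hv.2]
    · simp [hw.symm]
  obtain ⟨q, ⟨hqQ, hq⟩, rfl⟩ := hmap.ge (Subgroup.mem_top a)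
  exact ⟨q, hqQ, rfl, hq⟩

theorem mulSingle_mem_of_mulSingle_inv_mul_mem [Group.IsPerfect A]
    (ht : Subgroup.closure (Set.range t) = ⊤) (hc : ({c}ᶜ : Set Ω).Nontrivial)
    (hQ : ∀ i w, (Pi.mulSingle c (t i))⁻¹ * Pi.mulSingle w (t i) ∈ Q) (a : A) :
    Pi.mulSingle c a ∈ Q := by
  obtain ⟨w₁, hw₁, w₂, hw₂, hw⟩ := hc
  suffices commutator A ≤ Q.comap (MonoidHom.mulSingle (fun _ => A) c) from
    this Group.IsPerfect.mem_commutator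
  rw [commutator_def, Subgroup.commutator_le]
  intro a _ b _
  obtain ⟨p, hpQ, rfl, hp⟩ := exists_mem_apply_eq_of_mulSingle_inv_mul_mem ht hw₁ (hQ · w₁) a
  obtain ⟨q, hqQ, rfl, hq⟩ := exists_mem_apply_eq_of_mulSingle_inv_mul_mem ht hw₂ (hQ · w₂) b
  rw [Subgroup.mem_comap, MonoidHom.mulSingle_apply, ← commutatorElement_eq_mulSingle hw hp hq]
  exact Q.mul_mem (Q.mul_mem (Q.mul_mem hpQ hqQ) (Q.inv_mem hpQ)) (Q.inv_mem hqQ)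

theorem eq_top_of_mulSingle_inv_mul_mem [Finite Ω] [Group.IsPerfect A]
    (ht : Subgroup.closure (Set.range t) = ⊤) (hc : ({c}ᶜ : Set Ω).Nontrivial)
    (hQ : ∀ i w, (Pi.mulSingle c (t i))⁻¹ * Pi.mulSingle w (t i) ∈ Q) : Q = ⊤ := by
  have hsingle (w : Ω) : (MonoidHom.mulSingle (fun _ => A) w).range ≤ Q :=
    range_le_of_forall_mem ht fun i => by
      simpa using
        Q.mul_mem (mulSingle_mem_of_mulSingle_inv_mul_mem ht hc hQ (t i)) (hQ i w)
  exact eq_top_iff.mpr fun a _ =>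
    Subgroup.pi_mem_of_mulSingle_mem a fun w => hsingle w ⟨a w, rfl⟩

/- In the commutator of `u i * ψ (mulSingle c (t i))` and `f` the factors `u i` cancel, which leaves
`ψ ((mulSingle c (t i))⁻¹ * mulSingle w (t i))`. -/
theorem range_le_of_mul_mulSingle_mem [Finite Ω] [Group.IsPerfect A]
    (ht : Subgroup.closure (Set.range t) = ⊤) (hc : ({c}ᶜ : Set Ω).Nontrivial)
    {Γ : Type*} [Group Γ] {K : Subgroup Γ} (ψ : (Ω → A) →* Γ) {u : ι → Γ}
    (hu : ∀ i, u i * ψ (Pi.mulSingle c (t i)) ∈ K)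
    (hf : ∀ w, ∃ f ∈ K, (∀ i, Commute f (u i)) ∧
      ∀ a, SemiconjBy f (ψ (Pi.mulSingle c a)) (ψ (Pi.mulSingle w a))) :
    ψ.range ≤ K := by
  suffices K.comap ψ = ⊤ by
    rwa [MonoidHom.range_eq_map, Subgroup.map_le_iff_le_comap, top_le_iff]
  refine eq_top_of_mulSingle_inv_mul_mem ht hc fun i w => ?_
  obtain ⟨f, hfK, hcomm, hconj⟩ := hf w
  have hmem := K.mul_mem (K.inv_mem (hu i)) (K.mul_mem (K.mul_mem hfK (hu i)) (K.inv_mem hfK))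
  have hmul : f * (u i * ψ (Pi.mulSingle c (t i))) = u i * ψ (Pi.mulSingle w (t i)) * f :=
    (SemiconjBy.mul_right (hcomm i) (hconj (t i))).eq
  rw [hmul, mul_inv_cancel_right, mul_inv_rev, mul_assoc, inv_mul_cancel_left] at hmem
  rwa [Subgroup.mem_comap, map_mul, map_inv]

end Generation

/-- `G` is topologically generated by `n` (not necessarily distinct) elements. -/
def IsTopologicallyGeneratedBy (G : Type*) [Group G] [TopologicalSpace G] (n : ℕ) : Prop :=
  ∃ g : Fin n → G, Dense (Subgroup.closure (Set.range g) : Set G)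

namespace IsTopologicallyGeneratedBy

variable {G : Type*} [Group G] [TopologicalSpace G]

theorem of_family {ι : Type*} [Fintype ι] {n : ℕ} (hι : Fintype.card ι ≤ n) (g : ι → G)
    (hg : Dense (Subgroup.closure (Set.range g) : Set G)) : IsTopologicallyGeneratedBy G n := by
  obtain ⟨g', hg'⟩ := exists_fin_range_subset g hι
  exact ⟨g', hg.mono (Subgroup.closure_mono hg')⟩

theorem mono {n n' : ℕ} (h : IsTopologicallyGeneratedBy G n) (hn : n ≤ n') :
    IsTopologicallyGeneratedBy G n' := by
  obtain ⟨g, hg⟩ := h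
  exact of_family (by simpa using hn) g hg

end IsTopologicallyGeneratedBy

/-- The element of `A ⟨≀⟩ P` (for `b = true`) or of `A ≀ P` (for `b = false`) with base part `a`
and top part `π`. -/
def mixedStep {A P : PermGroup} (b : Bool) (a : P.carrier → A.grp) (π : P.grp) :
    (cond b (ExpP A P) (WrP A P)).grp :=
  match b with
  | true => ⟨prodPerm (fun i => a i) π, fun i => a i, π, fun i => (a i).2, π.2, rfl⟩
  | false => ⟨wrPerm (fun i => a i) π, fun i => a i, π, fun i => (a i).2, π.2, rfl⟩

/-- The point with coordinates `x` and `c` of the set permuted by `A ⟨≀⟩ P` or `A ≀ P`: the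
constant function `x` for an exponentiation, the pair `(x, c)` for a permutational wreath
product. -/
def mixedPoint {A P : PermGroup} (b : Bool) (x : A.carrier) (c : P.carrier) :
    (cond b (ExpP A P) (WrP A P)).carrier :=
  match b with
  | true => fun _ : P.carrier => x
  | false => (x, c)

section MixedStep

variable {A P : PermGroup} (b : Bool)

theorem mixedStep_mul (a a' : P.carrier → A.grp) (π π' : P.grp) :
    mixedStep b a π * mixedStep b a' π' =
      mixedStep b (a * fun i => a' (π⁻¹ • i)) (π * π') := by
  cases b
  · exact Subtype.ext (wrPerm_mul _ _ _ _)
  · exact Subtype.ext (prodPerm_mul _ _ _ _)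

theorem mixedStep_one : mixedStep b (1 : P.carrier → A.grp) (1 : P.grp) = 1 := by
  cases b
  · exact Subtype.ext wrPerm_one
  · exact Subtype.ext prodPerm_one

variable {b}

theorem isLiftMixed_iff {g : (cond b (ExpP A P) (WrP A P)).grp} {π : P.grp} :
    IsLiftMixed A P b g π ↔ ∃ a, g = mixedStep b a π := by
  cases b <;> constructor
  all_goals first
    | rintro ⟨a, ha, h⟩
      exact ⟨fun i => ⟨a i, ha i⟩, Subtype.ext h⟩
    | rintro ⟨a, rfl⟩
      exact ⟨fun i => a i, fun i => (a i).2, rfl⟩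

theorem exists_eq_mixedStep (g : (cond b (ExpP A P) (WrP A P)).grp) :
    ∃ a π, g = mixedStep b a π := by
  cases b <;>
  · obtain ⟨_, a, π, ha, hπ, rfl⟩ := g
    exact ⟨fun i => ⟨a i, ha i⟩, ⟨π, hπ⟩, rfl⟩

theorem mixedPoint_injective (c : P.carrier) :
    Function.Injective fun x : A.carrier => mixedPoint b x c := by
  intro x y h
  cases b
  · exact congrArg Prod.fst (show (x, c) = (y, c) from h)
  · exact congrFun (show (fun _ : P.carrier => x) = fun _ => y from h) c

theorem mixedStep_one_smul_mixedPoint (x : A.carrier) {c : P.carrier} {π : P.grp}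
    (h : b = true ∨ π • c = c) :
    mixedStep b (1 : P.carrier → A.grp) π • mixedPoint b x c = mixedPoint b x c := by
  cases b
  · exact Prod.ext rfl (h.resolve_left Bool.false_ne_true)
  · rfl

instance finite_mixed [Finite A.carrier] [Finite P.carrier] :
    Finite (cond b (ExpP A P) (WrP A P)).carrier := by
  cases b
  · exact inferInstanceAs (Finite (A.carrier × P.carrier))
  · exact inferInstanceAs (Finite (P.carrier → A.carrier))

instance isPretransitive_mixed [MulAction.IsPretransitive A.grp A.carrier]
    [MulAction.IsPretransitive P.grp P.carrier] :
    MulAction.IsPretransitive (cond b (ExpP A P) (WrP A P)).grp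
      (cond b (ExpP A P) (WrP A P)).carrier where
  exists_smul_eq x y := by
    cases b
    · obtain ⟨g, hg⟩ := MulAction.exists_smul_eq A.grp x.1 y.1
      obtain ⟨π, hπ⟩ := MulAction.exists_smul_eq P.grp x.2 y.2
      exact ⟨mixedStep false (fun _ => g) π, Prod.ext hg hπ⟩
    · choose a ha using fun i : P.carrier => MulAction.exists_smul_eq A.grp (x i) (y i)
      exact ⟨mixedStep true a 1, funext ha⟩

end MixedStep

section Levels

variable (S : ℕ → PermGroup) (e : ℕ → Bool)

instance finite_mixedPG [∀ k, Finite (S k).carrier] : ∀ k, Finite (mixedPG S e k).carrier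
  | 0 => inferInstanceAs (Finite (S 0).carrier)
  | k + 1 =>
    have := finite_mixedPG k
    finite_mixed

instance isPretransitive_mixedPG [∀ k, MulAction.IsPretransitive (S k).grp (S k).carrier] :
    ∀ k, MulAction.IsPretransitive (mixedPG S e k).grp (mixedPG S e k).carrier
  | 0 => inferInstanceAs (MulAction.IsPretransitive (S 0).grp (S 0).carrier)
  | k + 1 =>
    have := isPretransitive_mixedPG k
    isPretransitive_mixed

/-- The base point of level `k` built from the points `x j` of the factors; an exponentiation step
forgets the base point of the level below. -/
def basePoint (x : ∀ k, (S k).carrier) : ∀ k, (mixedPG S e k).carrier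
  | 0 => x 0
  | k + 1 => mixedPoint (e (k + 1)) (x (k + 1)) (basePoint x k)

theorem nontrivial_compl_basePoint (hcard : ∀ k, 2 < Nat.card (S k).carrier)
    (x : ∀ k, (S k).carrier) (k : ℕ) :
    ({basePoint S e x k}ᶜ : Set (mixedPG S e k).carrier).Nontrivial := by
  have hx k := nontrivial_compl_singleton_of_two_lt_card (hcard k) (x k)
  cases k with
  | zero => exact hx 0
  | succ k =>
    have hinj := mixedPoint_injective (A := S (k + 1)) (b := e (k + 1)) (basePoint S e x k)
    refine ((hx (k + 1)).image hinj).mono ?_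
    rintro _ ⟨y, hy, rfl⟩
    exact hinj.ne hy

end Levels

/-- A choice, for every level `k` and every point of level `k`, of an element of `S (k + 1)`: the
coordinates of an element of `mixedLimit S e` other than its component in `S 0`. The pointwise
multiplication of portraits is not the multiplication of the limit, see `ofPortrait_mul`. -/
abbrev Portrait (S : ℕ → PermGroup) (e : ℕ → Bool) : Type :=
  ∀ k, (mixedPG S e k).carrier → (S (k + 1)).grp

section Portrait

variable {S : ℕ → PermGroup} {e : ℕ → Bool}

/-- The element of the limit with component `s` in `S 0` and portrait `a`. -/
def ofPortrait (s : (mixedPG S e 0).grp) (a : Portrait S e) : mixedLimit S e where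
  val := Nat.rec s fun k => mixedStep (e (k + 1)) (a k)
  property _ := isLiftMixed_iff.mpr ⟨_, rfl⟩

theorem ofPortrait_succ (s : (mixedPG S e 0).grp) (a : Portrait S e) (k : ℕ) :
    (ofPortrait s a).1 (k + 1) = mixedStep (e (k + 1)) (a k) ((ofPortrait s a).1 k) := rfl

theorem exists_ofPortrait_eq (f : mixedLimit S e) : ∃ s a, ofPortrait s a = f := by
  choose a ha using fun k => isLiftMixed_iff.mp (f.2 k)
  refine ⟨f.1 0, a, Subtype.ext (funext fun k => ?_)⟩
  induction k with
  | zero => rfl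
  | succ k ih => exact (congrArg (mixedStep _ (a k)) ih).trans (ha k).symm

theorem ofPortrait_apply_congr (s : (mixedPG S e 0).grp) {a b : Portrait S e} {n : ℕ}
    (h : ∀ k < n, a k = b k) : (ofPortrait s a).1 n = (ofPortrait s b).1 n := by
  induction n with
  | zero => rfl
  | succ n ih =>
    rw [ofPortrait_succ, ofPortrait_succ, ih fun k hk => h k (by lia), h n (by lia)]

theorem ofPortrait_mul (s s' : (mixedPG S e 0).grp) (a a' : Portrait S e) :
    ofPortrait s a * ofPortrait s' a' =
      ofPortrait (s * s') fun k => a k * fun w => a' k (((ofPortrait s a).1 k)⁻¹ • w) := by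
  refine Subtype.ext (funext fun k => ?_)
  induction k with
  | zero => rfl
  | succ k ih => exact (mixedStep_mul _ _ _ _ _).trans (congrArg (mixedStep _ _) ih)

theorem ofPortrait_one : ofPortrait (1 : (mixedPG S e 0).grp) (1 : Portrait S e) = 1 := by
  refine Subtype.ext (funext fun k => ?_)
  induction k with
  | zero => rfl
  | succ k ih => exact (congrArg (mixedStep _ 1) ih).trans (mixedStep_one _)

theorem ofPortrait_apply_eq_one {a : Portrait S e} {n : ℕ} (h : ∀ k < n, a k = 1) :
    (ofPortrait 1 a).1 n = 1 := by
  rw [ofPortrait_apply_congr 1 (b := 1) h, ofPortrait_one]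
  rfl

theorem exists_ofPortrait_apply_eq (n : ℕ) (g : (mixedPG S e n).grp) :
    ∃ s, ∃ a : Portrait S e, (∀ k ≥ n, a k = 1) ∧ (ofPortrait s a).1 n = g := by
  induction n with
  | zero => exact ⟨g, 1, fun _ _ => rfl, rfl⟩
  | succ n ih =>
    obtain ⟨a', h, rfl⟩ := exists_eq_mixedStep g
    obtain ⟨s, a, ha, rfl⟩ := ih h
    refine ⟨s, Function.update a n a', fun k hk => ?_, ?_⟩
    · rw [Function.update_of_ne (by lia), ha k (by lia)]
    · rw [ofPortrait_succ, Function.update_self,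
        ofPortrait_apply_congr s fun k hk => Function.update_of_ne hk.ne a' a]

theorem dense_of_forall_ofPortrait_mem {K : Subgroup (mixedLimit S e)}
    (hK : ∀ n s (a : Portrait S e), (∀ k ≥ n, a k = 1) → ofPortrait s a ∈ K) :
    Dense (K : Set (mixedLimit S e)) := by
  intro f
  obtain ⟨s, a, rfl⟩ := exists_ofPortrait_eq f
  let truncation (n : ℕ) : mixedLimit S e := ofPortrait s fun k => if k < n then a k else 1
  have htendsto : Filter.Tendsto truncation Filter.atTop (nhds (ofPortrait s a)) := by
    rw [tendsto_subtype_rng, tendsto_pi_nhds]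
    refine fun k => tendsto_const_nhds.congr' ?_
    filter_upwards [Filter.eventually_ge_atTop k] with n hn
    exact ofPortrait_apply_congr s fun j hj => (if_pos (by lia)).symm
  refine mem_closure_of_tendsto htendsto (Filter.Eventually.of_forall fun n => ?_)
  exact hK n s _ fun k hk => if_neg (by lia)

theorem ofPortrait_apply_smul_basePoint {s : (mixedPG S e 0).grp} {a : Portrait S e} {n : ℕ}
    (ha : ∀ k ≥ n, a k = 1) (x : ∀ k, (S k).carrier) {i : ℕ} (hni : n < i) (hi : e i = true)
    {k : ℕ} (hk : i ≤ k) :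
    (ofPortrait s a).1 k • basePoint S e x k = basePoint S e x k := by
  induction k, hk using Nat.le_induction with
  | base =>
    obtain ⟨j, rfl⟩ := Nat.exists_eq_add_one_of_ne_zero (Nat.ne_zero_of_lt hni)
    rw [ofPortrait_succ, ha j (by lia)]
    exact mixedStep_one_smul_mixedPoint _ (.inl hi)
  | succ k hk ih =>
    rw [ofPortrait_succ, ha k (by lia)]
    exact mixedStep_one_smul_mixedPoint _ (.inr ih)

end Portrait

section LevelHom

variable {S : ℕ → PermGroup} {e : ℕ → Bool}

/-- The embedding of `S 0` in the limit as the elements with trivial portrait. -/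
def rootHom (S : ℕ → PermGroup) (e : ℕ → Bool) : (mixedPG S e 0).grp →* mixedLimit S e :=
  MonoidHom.mk' (fun s => ofPortrait s 1) fun s s' => by
    rw [ofPortrait_mul]
    congr 1

theorem ofPortrait_mulSingle_apply_eq_one {n k : ℕ} (hk : k ≤ n)
    (a : (mixedPG S e n).carrier → (S (n + 1)).grp) :
    (ofPortrait (1 : (mixedPG S e 0).grp) (Pi.mulSingle n a : Portrait S e)).1 k = 1 :=
  ofPortrait_apply_eq_one fun j hj => by rw [Pi.mulSingle_eq_of_ne (hj.trans_le hk).ne]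

/-- The embedding in the limit of the base group of the step from level `n` to level `n + 1`. -/
def levelHom (S : ℕ → PermGroup) (e : ℕ → Bool) (n : ℕ) :
    ((mixedPG S e n).carrier → (S (n + 1)).grp) →* mixedLimit S e :=
  MonoidHom.mk' (fun a => ofPortrait 1 (Pi.mulSingle n a)) fun a b => by
    rw [ofPortrait_mul, mul_one]
    congr 1
    funext k
    obtain rfl | hk := eq_or_ne k n
    · rw [ofPortrait_mulSingle_apply_eq_one le_rfl]
      simp only [Pi.mulSingle_eq_same, inv_one, one_smul]
    · simp only [Pi.mulSingle_eq_of_ne hk]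
      rfl

theorem levelHom_apply (n : ℕ) (a : (mixedPG S e n).carrier → (S (n + 1)).grp) :
    levelHom S e n a = ofPortrait 1 (Pi.mulSingle n a) := rfl

theorem ofPortrait_eq_levelHom_mul {n : ℕ} (s : (mixedPG S e 0).grp) {a : Portrait S e}
    (ha : ∀ k ≥ n + 1, a k = 1) :
    ofPortrait s a = levelHom S e n (a n) * ofPortrait s (Function.update a n 1) := by
  rw [levelHom_apply, ofPortrait_mul, one_mul]
  congr 1
  funext k
  obtain hk | rfl | hk := lt_trichotomy k n
  · simp [ofPortrait_mulSingle_apply_eq_one hk.le, hk.ne]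
  · simp only [Pi.mulSingle_eq_same, Function.update_self]
    exact (mul_one _).symm
  · simp only [Pi.mulSingle_eq_of_ne hk.ne', Function.update_of_ne hk.ne', ha k hk]
    rfl

theorem ofPortrait_one_eq_mul_levelHom {n : ℕ} {a : Portrait S e} (ha : ∀ k < n, a k = 1) :
    ofPortrait 1 a = ofPortrait 1 (Function.update a n 1) * levelHom S e n (a n) := by
  rw [levelHom_apply, ofPortrait_mul, one_mul]
  congr 1
  funext k
  obtain rfl | hk := eq_or_ne k n
  · have hroot : (ofPortrait 1 (Function.update a k 1)).1 k = 1 :=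
      ofPortrait_apply_eq_one fun j hj => by rw [Function.update_of_ne hj.ne, ha j hj]
    simp only [hroot, Function.update_self, Pi.mulSingle_eq_same, inv_one, one_smul, one_mul]
  · simp only [Pi.mulSingle_eq_of_ne hk, Function.update_of_ne hk]
    exact (mul_one _).symm

theorem ofPortrait_semiconjBy_levelHom {n : ℕ} (s : (mixedPG S e 0).grp) {a : Portrait S e}
    (ha : ∀ k ≥ n, a k = 1) (b : (mixedPG S e n).carrier → (S (n + 1)).grp) :
    SemiconjBy (ofPortrait s a) (levelHom S e n b)
      (levelHom S e n fun w => b (((ofPortrait s a).1 n)⁻¹ • w)) := by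
  simp only [SemiconjBy, levelHom_apply, ofPortrait_mul, one_mul, mul_one]
  congr 1
  funext k
  obtain hk | rfl | hk := lt_trichotomy k n
  · simp only [ofPortrait_mulSingle_apply_eq_one hk.le, Pi.mulSingle_eq_of_ne hk.ne, inv_one,
      one_smul, Pi.one_apply, one_mul]
    exact mul_one _
  · simp only [ha k le_rfl, Pi.mulSingle_eq_same, Pi.one_apply]
    exact (one_mul _).trans (mul_one _).symm
  · simp only [ha k hk.le, Pi.mulSingle_eq_of_ne hk.ne', Pi.one_apply]

end LevelHom

section Directed

variable {S : ℕ → PermGroup} {e : ℕ → Bool} [∀ k, DecidableEq (mixedPG S e k).carrier]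

/-- The element of the limit whose portrait at level `k` is `y k` at the point `c k` and trivial
at all other points. -/
def directed (c : ∀ k, (mixedPG S e k).carrier) (y : ∀ k, (S (k + 1)).grp) : mixedLimit S e :=
  ofPortrait 1 fun k => Pi.mulSingle (c k) (y k)

variable {c : ∀ k, (mixedPG S e k).carrier} {y : ∀ k, (S (k + 1)).grp} {n : ℕ}

theorem directed_eq_mul_levelHom (hy : ∀ k < n, y k = 1) :
    directed c y =
      directed c (Function.update y n 1) * levelHom S e n (Pi.mulSingle (c n) (y n)) := by
  have hupdate : (fun k => Pi.mulSingle (c k) (Function.update y n 1 k) : Portrait S e) =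
      Function.update (fun k => Pi.mulSingle (c k) (y k)) n 1 := by
    funext k
    obtain rfl | hk := eq_or_ne k n
    · simp only [Function.update_self, Pi.mulSingle_one]
    · simp only [Function.update_of_ne hk]
  rw [directed, directed, hupdate]
  exact ofPortrait_one_eq_mul_levelHom fun k hk => by rw [hy k hk, Pi.mulSingle_one]

theorem commute_ofPortrait_directed {s : (mixedPG S e 0).grp} {a : Portrait S e}
    (ha : ∀ k ≥ n, a k = 1) (hy : ∀ k < n, y k = 1)
    (hfix : ∀ k, y k ≠ 1 → (ofPortrait s a).1 k • c k = c k) :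
    Commute (ofPortrait s a) (directed c y) := by
  rw [commute_iff_eq, directed, ofPortrait_mul, ofPortrait_mul, one_mul, mul_one]
  congr 1
  funext k
  obtain hk | hk := lt_or_ge k n
  · have hroot : (ofPortrait 1 fun j => Pi.mulSingle (c j) (y j)).1 k = 1 :=
      ofPortrait_apply_eq_one fun j hj => by rw [hy j (hj.trans hk), Pi.mulSingle_one]
    simp only [hroot, hy k hk, Pi.mulSingle_one, Pi.one_apply, inv_one, one_smul, one_mul]
    exact mul_one _
  · rw [mulSingle_inv_smul]
    simp only [ha k hk, Pi.one_apply, one_mul]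
    obtain hyk | hyk := eq_or_ne (y k) 1
    · simp only [hyk, Pi.mulSingle_one]
      exact (one_mul _).symm
    · rw [hfix k hyk]
      exact (mul_one _).symm

end Directed

section ResidueTail

variable {A : ℕ → Type*} [∀ k, One (A k)]

/-- The part of the sequence `t` supported on the indices `k ≥ n` with `k ≡ r` modulo `m`. -/
def residueTail (t : ∀ k, A k) (m r n k : ℕ) : A k :=
  if n ≤ k ∧ k % m = r then t k else 1

variable (t : ∀ k, A k) (m r n : ℕ)

theorem residueTail_of_lt {k : ℕ} (hk : k < n) : residueTail t m r n k = 1 :=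
  if_neg fun h => h.1.not_gt hk

theorem residueTail_mod_self : residueTail t m (n % m) n n = t n :=
  if_pos ⟨le_rfl, rfl⟩

theorem update_residueTail :
    Function.update (residueTail t m r n) n 1 = residueTail t m r (n + 1) := by
  funext k
  obtain rfl | hk := eq_or_ne k n
  · rw [Function.update_self, residueTail_of_lt t m r _ k.lt_succ_self]
  · rw [Function.update_of_ne hk]
    exact if_congr (by lia) rfl rfl

variable {t m n}

theorem add_le_of_residueTail_ne_one {k : ℕ} (h : residueTail t m (n % m) (n + 1) k ≠ 1) :
    n + m ≤ k := by
  obtain ⟨hnk, hmod⟩ : n + 1 ≤ k ∧ k % m = n % m := by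
    by_contra hk
    exact h (if_neg hk)
  exact Nat.ModEq.add_le_of_lt hmod.symm hnk

end ResidueTail

section Induction

variable {S : ℕ → PermGroup} {e : ℕ → Bool} [∀ k, DecidableEq (mixedPG S e k).carrier]
  {K : Subgroup (mixedLimit S e)} {ι : Type*} {t : ∀ k, ι → (S (k + 1)).grp}
  {x : ∀ k, (S k).carrier} {m n : ℕ}

theorem exists_commute_semiconjBy_levelHom
    [∀ k, MulAction.IsPretransitive (S k).grp (S k).carrier]
    (hfinitary : ∀ s (a : Portrait S e), (∀ k ≥ n, a k = 1) → ofPortrait s a ∈ K)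
    (hstride : ∃ i, n < i ∧ i ≤ n + m ∧ e i = true) (w : (mixedPG S e n).carrier) :
    ∃ f ∈ K,
      (∀ y : ∀ k, (S (k + 1)).grp, (∀ k, y k ≠ 1 → n + m ≤ k) →
        Commute f (directed (basePoint S e x) y)) ∧
      ∀ a, SemiconjBy f (levelHom S e n (Pi.mulSingle (basePoint S e x n) a))
        (levelHom S e n (Pi.mulSingle w a)) := by
  obtain ⟨g, rfl⟩ := MulAction.exists_smul_eq (mixedPG S e n).grp (basePoint S e x n) w
  obtain ⟨s, a, ha, rfl⟩ := exists_ofPortrait_apply_eq n g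
  obtain ⟨i, hni, him, hi⟩ := hstride
  refine ⟨ofPortrait s a, hfinitary s a ha, fun y hy => ?_, fun b => ?_⟩
  · refine commute_ofPortrait_directed ha (fun k hk => ?_) fun k hk => ?_
    · by_contra hyk
      exact (hy k hyk).not_gt (by lia)
    · exact ofPortrait_apply_smul_basePoint ha x hni hi (him.trans (hy k hk))
  · rw [← mulSingle_inv_smul]
    exact ofPortrait_semiconjBy_levelHom s ha _

theorem range_levelHom_le [Finite (mixedPG S e n).carrier]
    [∀ k, MulAction.IsPretransitive (S k).grp (S k).carrier] [Group.IsPerfect (S (n + 1)).grp]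
    (hx : ({basePoint S e x n}ᶜ : Set (mixedPG S e n).carrier).Nontrivial)
    (ht : Subgroup.closure (Set.range (t n)) = ⊤)
    (hstride : ∃ i, n < i ∧ i ≤ n + m ∧ e i = true)
    (hfinitary : ∀ s (a : Portrait S e), (∀ k ≥ n, a k = 1) → ofPortrait s a ∈ K)
    (hdirected : ∀ i,
      directed (basePoint S e x) (residueTail (fun k => t k i) m (n % m) n) ∈ K) :
    (levelHom S e n).range ≤ K := by
  refine range_le_of_mul_mulSingle_mem ht hx (levelHom S e n)
    (u := fun i => directed (basePoint S e x) (residueTail (fun k => t k i) m (n % m) (n + 1)))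
    (fun i => ?_) fun w => ?_
  · have hsplit := directed_eq_mul_levelHom (c := basePoint S e x) (n := n)
      fun k => residueTail_of_lt (fun k => t k i) m (n % m) n
    rw [update_residueTail, residueTail_mod_self] at hsplit
    exact hsplit ▸ hdirected i
  · obtain ⟨f, hfK, hcomm, hconj⟩ := exists_commute_semiconjBy_levelHom hfinitary hstride w
    exact ⟨f, hfK, fun i => hcomm _ fun _ => add_le_of_residueTail_ne_one, hconj⟩

theorem ofPortrait_mem_and_directed_mem [∀ k, Finite (S k).carrier]
    [∀ k, MulAction.IsPretransitive (S k).grp (S k).carrier] [∀ k, Group.IsPerfect (S k).grp]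
    (hcard : ∀ k, 2 < Nat.card (S k).carrier)
    (ht : ∀ k, Subgroup.closure (Set.range (t k)) = ⊤)
    (hstride : ∀ j, ∃ i, j < i ∧ i ≤ j + m ∧ e i = true)
    (hroot : (rootHom S e).range ≤ K)
    (hdirected : ∀ r < m, ∀ i,
      directed (basePoint S e x) (residueTail (fun k => t k i) m r 0) ∈ K) (n : ℕ) :
    (∀ s (a : Portrait S e), (∀ k ≥ n, a k = 1) → ofPortrait s a ∈ K) ∧
      ∀ r < m, ∀ i, directed (basePoint S e x) (residueTail (fun k => t k i) m r n) ∈ K := by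
  have hm : 0 < m := by
    obtain ⟨i, hi, him, -⟩ := hstride 0
    lia
  induction n with
  | zero =>
    refine ⟨fun s a ha => ?_, hdirected⟩
    obtain rfl : a = 1 := funext fun k => ha k k.zero_le
    exact hroot ⟨s, rfl⟩
  | succ n ih =>
    obtain ⟨hfinitary, hdirected⟩ := ih
    have hlevel := range_levelHom_le (nontrivial_compl_basePoint S e hcard x n) (ht n)
      (hstride n) hfinitary (hdirected (n % m) (Nat.mod_lt n hm))
    refine ⟨fun s a ha => ?_, fun r hr i => ?_⟩
    · rw [ofPortrait_eq_levelHom_mul s ha]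
      refine K.mul_mem (hlevel ⟨_, rfl⟩) (hfinitary s _ fun k hk => ?_)
      obtain rfl | hkn := eq_or_ne k n
      · exact Function.update_self ..
      · rw [Function.update_of_ne hkn, ha k (by lia)]
    · have hsplit := directed_eq_mul_levelHom (c := basePoint S e x) (n := n)
        fun k => residueTail_of_lt (fun k => t k i) m r n
      rw [update_residueTail] at hsplit
      rw [eq_mul_inv_of_mul_eq hsplit.symm]
      exact K.mul_mem (hdirected r hr i) (K.inv_mem (hlevel ⟨_, rfl⟩))

end Induction

theorem theoremB_general {d m : ℕ} (S : ℕ → PermGroup) (e : ℕ → Bool)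
    [∀ k, Finite (S k).carrier] [∀ k, MulAction.IsPretransitive (S k).grp (S k).carrier]
    [∀ k, Nontrivial (S k).grp] [∀ k, Group.IsPerfect (S k).grp]
    (hgen : ∀ k, ∃ T : Finset (S k).grp,
      T.card ≤ d ∧ Subgroup.closure (T : Set (S k).grp) = ⊤)
    (hstride : ∀ j, ∃ i, j < i ∧ i ≤ j + m ∧ e i = true) :
    IsTopologicallyGeneratedBy (mixedLimit S e) ((m + 1) * d) := by
  classical
  have hcard k : 2 < Nat.card (S k).carrier := two_lt_card_of_isPerfect (S k).grp
  have x k : (S k).carrier := (Finite.card_pos_iff.mp (zero_lt_two.trans (hcard k))).some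
  choose T hT hTcl using hgen
  choose t ht using fun k => exists_fin_closure_range_eq_top (hT k) (hTcl k)
  let g : Option (Fin m) × Fin d → mixedLimit S e
    | (none, i) => rootHom S e (t 0 i)
    | (some r, i) => directed (basePoint S e x) (residueTail (fun k => t (k + 1) i) m r 0)
  have hroot : (rootHom S e).range ≤ Subgroup.closure (Set.range g) :=
    range_le_of_forall_mem (ht 0) fun i => Subgroup.subset_closure ⟨(none, i), rfl⟩
  have hdirected (r : ℕ) (hr : r < m) (i : Fin d) :
      directed (basePoint S e x) (residueTail (fun k => t (k + 1) i) m r 0) ∈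
        Subgroup.closure (Set.range g) :=
    Subgroup.subset_closure ⟨(some ⟨r, hr⟩, i), rfl⟩
  exact .of_family (by simp) g <| dense_of_forall_ofPortrait_mem fun n =>
    (ofPortrait_mem_and_directed_mem hcard (fun k => ht (k + 1)) hstride hroot hdirected n).1

/-- **Theorem B.** Here `e k = true` records that the `k`-th step of the iterated mixed
wreath product is an exponentiation (product action) step, i.e. `k` belongs to the set
`{k_n}`; the hypothesis `hstride` says precisely (with the convention `k_0 = 0`) that the
increasing sequence `{k_n}` of exponentiation steps is infinite and satisfies
`k_{n+1} - k_n ≤ mstride` for all `n`, i.e. that the mixed wreath product has stride at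
most `mstride`. -/
theorem theoremB (d mstride : ℕ) (hd : 0 < d) (hm : 0 < mstride) (m : ℕ → ℕ)
    (S : ∀ k, Subgroup (Perm (Fin (m k))))
    (htrans : ∀ k, ∀ x y : Fin (m k), ∃ σ ∈ S k, σ x = y)
    (hperf : ∀ k, commutator (S k) = ⊤)
    (hgen : ∀ k, ∃ T : Finset (S k), T.card ≤ d ∧ Subgroup.closure (T : Set (S k)) = ⊤)
    (hstab : ∀ k, ∃ i j : Fin (m k),
      {σ : Perm (Fin (m k)) | σ ∈ S k ∧ σ i = i} ≠ {σ : Perm (Fin (m k)) | σ ∈ S k ∧ σ j = j})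
    (e : ℕ → Bool)
    (hstride : ∀ j : ℕ, ∃ i : ℕ, j < i ∧ i ≤ j + mstride ∧ e i = true) :
    ∃ g : Fin (2 * mstride * d) → (mixedLimit (fun k => ⟨Fin (m k), S k⟩) e),
      Dense ((Subgroup.closure (Set.range g) :
        Subgroup (mixedLimit (fun k => ⟨Fin (m k), S k⟩) e)) :
          Set (mixedLimit (fun k => ⟨Fin (m k), S k⟩) e)) := by
  have (k : ℕ) : Finite (Fin (m k)) := inferInstance
  have (k : ℕ) : MulAction.IsPretransitive (S k) (Fin (m k)) :=
    ⟨fun i j => let ⟨σ, hσ, hij⟩ := htrans k i j; ⟨⟨σ, hσ⟩, hij⟩⟩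
  have (k : ℕ) : Nontrivial (S k) :=
    let ⟨_, _, hij⟩ := hstab k
    nontrivial_of_stabilizers_ne hij
  have (k : ℕ) : Group.IsPerfect (S k) := ⟨hperf k⟩
  exact (theoremB_general (fun k => ⟨Fin (m k), S k⟩) e hgen hstride).mono
    (Nat.mul_le_mul_right d (by lia))
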